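/- Let (σ,α) be a collection of hypermaps of genus zero on {1,…,n}. Then x^{κ(σ,α)} · R(σ,α;x,x) = Σ_{β≤α} x^{z(β⁻¹σ)}, the sum being over all refinements β of α. Equivalently, the noncrossing circuit partition polynomial of the medial map M(σ,α) satisfies j(M(σ,α);x) = x^{κ(σ,α)} · R(σ,α;x,x), since the coherent matchings of M(σ,α) are in bijection with the refinements β of α, a coherent matching corresponding to β producing a noncrossing Eulerian state with exactly z(β⁻¹σ) circuits. -/

import Mathlib

/-!
For permutations `σ, α` of an `n`-element set put
`defect σ α = n + 2κ(σ,α) - z(σ) - z(α) - z(α⁻¹σ)`, twice the genus, as an integer.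
Everything rests on how these counts change when a permutation is multiplied by a transposition
`(a b)`: the number of cycles goes up by one if `a, b` lie in a common cycle
(`zc_mul_swap_of_sameCycle`) and down by one otherwise (`zc_mul_swap_of_not`).  Consequently,
cutting a cycle of `α` by a transposition never increases the defect (`defect_mul_swap_le`).

A refinement `β ≤ α` satisfies `n + z(α) = z(β) + z(β⁻¹α)` (sum the genus zero conditions over
the cycles of `α`), which says that `β` arises from `α` by a sequence of such cuts; hence
`defect σ β ≤ defect σ α` (`defect_le_of_geodesic`).  The identity also arises from any
permutation by cuts, and `defect σ 1 = 0`, so defects are nonnegative.  Thus a refinement of the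
hyperedges of a genus zero hypermap again gives genus zero, and then the exponents
`κ(σ,α) + (κ(σ,β) - κ(σ,α)) + (κ(σ,β) + n - z(β) - z(σ))` and `z(β⁻¹σ)` agree.

For the medial map, a sign-reversing involution is the same thing as a permutation `β` of the
unsigned points.  The matching of `β` has one cycle per unsigned point, and its inverse times `σ′`
acts as `β` on the negative points and as `β⁻¹α` on the positive ones.  So on the support `S` of a
cycle of `α` the genus zero condition for the matching, `2|S| + 1 = |S| + z(β) + z(β⁻¹α)`, is the
one for `β` (`isRefinement_medial_iff`).
-/

open scoped Classical

namespace Hypermap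

variable {γ : Type*} [Fintype γ] [DecidableEq γ]

/-- The number of cycles of a permutation, counting fixed points as cycles. -/
noncomputable def zc (π : Equiv.Perm γ) : ℕ :=
  Nat.card (MulAction.orbitRel.Quotient (Subgroup.zpowers π) γ)

/-- The number of connected components of the collection of hypermaps `(σ, α)`. -/
noncomputable def kappa (σ α : Equiv.Perm γ) : ℕ :=
  Nat.card (MulAction.orbitRel.Quotient
    (Subgroup.closure ({σ, α} : Set (Equiv.Perm γ))) γ)

/-- The support of the cycle of `π` containing `x`. -/
def cycleSet (π : Equiv.Perm γ) (x : γ) : Set γ := {y | π.SameCycle x y}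

/-- The number of cycles of `π` meeting the set `S` (for invariant `S`,
the number of cycles of the restriction of `π` to `S`). -/
noncomputable def zcOn (π : Equiv.Perm γ) (S : Set γ) : ℕ :=
  (S.image fun x =>
    Quotient.mk (MulAction.orbitRel (Subgroup.zpowers π) γ) x).ncard

/-- `β` is a refinement of `α`: the support of every cycle of `α` is
`β`-invariant, and on the support `S` of each cycle of `α` the restriction
`βᵢ` of `β` satisfies the genus-zero condition `|S| + 1 = z(βᵢ) + z(βᵢ⁻¹αᵢ)`. -/
def IsRefinement (β α : Equiv.Perm γ) : Prop :=
  (∀ x, α.SameCycle x (β x)) ∧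
  ∀ x, Nat.card (cycleSet α x) + 1 =
    zcOn β (cycleSet α x) + zcOn (β⁻¹ * α) (cycleSet α x)

/-- The Whitney polynomial of a collection of hypermaps. -/
noncomputable def whitney {A : Type*} [CommRing A] (σ α : Equiv.Perm γ) (u v : A) : A :=
  ∑ β ∈ Finset.univ.filter (fun β => IsRefinement β α),
    u ^ (kappa σ β - kappa σ α) *
      v ^ (kappa σ β + Fintype.card γ - zc β - zc σ)

end Hypermap

namespace Hypermap

variable {γ : Type*} [Fintype γ] [DecidableEq γ]

/-- The vertex permutation `σ′` of the medial map of a hypermap `(σ,α)`.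
Signed points are pairs `(i, s) : γ × Bool`, with `(i, false) = i⁻` and
`(i, true) = i⁺`.  To each cycle `(i₁,…,i_k)` of `α` corresponds the cycle
`(i₁⁻,i₁⁺,i₂⁻,i₂⁺,…,i_k⁻,i_k⁺)` of `σ′`. -/
def medialSigma (α : Equiv.Perm γ) : Equiv.Perm (γ × Bool) where
  toFun p := if p.2 then (α p.1, false) else (p.1, true)
  invFun p := if p.2 then (p.1, false) else (α⁻¹ p.1, true)
  left_inv := by rintro ⟨i, _ | _⟩ <;> simp
  right_inv := by rintro ⟨i, _ | _⟩ <;> simp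

/-- The edge permutation `α′` of the medial map of a hypermap `(σ,α)`:
its cycles are the `2`-cycles `(i⁺, σ(i)⁻)`. -/
def medialAlpha (σ : Equiv.Perm γ) : Equiv.Perm (γ × Bool) where
  toFun p := if p.2 then (σ p.1, false) else (σ⁻¹ p.1, true)
  invFun p := if p.2 then (σ p.1, false) else (σ⁻¹ p.1, true)
  left_inv := by rintro ⟨i, _ | _⟩ <;> simp
  right_inv := by rintro ⟨i, _ | _⟩ <;> simp

end Hypermap

namespace Hypermap

variable {γ : Type*} [Fintype γ] [DecidableEq γ]

/-- A coherent matching of the medial map `M(σ,α)`: a fixed-point-free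
involution of the signed points that matches each positive point to a negative
point and refines (in the genus-zero, i.e. noncrossing, sense) the vertex
permutation `σ′ = medialSigma α` of the medial map. -/
def IsCoherentMatching (α : Equiv.Perm γ) (μ : Equiv.Perm (γ × Bool)) : Prop :=
  (∀ p, μ (μ p) = p) ∧ (∀ p, μ p ≠ p) ∧
  (∀ p : γ × Bool, (μ p).2 = !p.2) ∧
  IsRefinement μ (medialSigma α)

/-- The number of circuits of the noncrossing Eulerian state induced by the
matching `μ`: circuits correspond bijectively to the cycles, on the positive
points, of the permutation following an edge of the medial map and then the
matching. -/
noncomputable def circuitCount (σ : Equiv.Perm γ) (μ : Equiv.Perm (γ × Bool)) : ℕ :=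
  zcOn (μ * medialAlpha σ) {p : γ × Bool | p.2 = true}

/-- The noncrossing circuit partition polynomial `j(M(σ,α);x)` of the medial
map of `(σ,α)`. -/
noncomputable def ncCircuitPoly {A : Type*} [CommRing A] (σ α : Equiv.Perm γ)
    (x : A) : A :=
  ∑ μ ∈ Finset.univ.filter (fun μ => IsCoherentMatching α μ),
    x ^ circuitCount σ μ

/-- The coherent matching associated to a refinement `β` of `α`: it matches
`i⁺` to `β(i)⁻`. -/
def matchingOf (β : Equiv.Perm γ) : Equiv.Perm (γ × Bool) := medialAlpha β

end Hypermap

set_option linter.unusedSectionVars false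

namespace Hypermap

open Equiv Equiv.Perm

/-! ### Orbit counts and transpositions -/

section Counting

variable {γ : Type*}

/-- The partition of the points into orbits of the group generated by a set of permutations. -/
def gen (S : Set (Perm γ)) : Setoid γ := MulAction.orbitRel (Subgroup.closure S) γ

/-- The number of classes of an equivalence relation. -/
noncomputable def classCount (r : Setoid γ) : ℕ := Nat.card (Quotient r)

theorem gen_rel_apply {S : Set (Perm γ)} {g : Perm γ} (hg : g ∈ Subgroup.closure S) (x : γ) :
    gen S x (g x) := by
  refine (gen S).symm ?_
  change g x ∈ MulAction.orbit (Subgroup.closure S) x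
  exact ⟨⟨g, hg⟩, rfl⟩

theorem apply_inv_cancel (g : Perm γ) (x : γ) : g (g⁻¹ x) = x := by simp

/-- The orbit partition is the finest equivalence relation relating every point to its image under
each generator. -/
theorem gen_le_iff {S : Set (Perm γ)} {r : Setoid γ} :
    gen S ≤ r ↔ ∀ g ∈ S, ∀ x, r x (g x) := by
  constructor
  · intro h g hg x
    exact h (gen_rel_apply (Subgroup.subset_closure hg) x)
  · intro h x y hxy
    have key : ∀ g ∈ Subgroup.closure S, ∀ x, r x (g x) := by
      intro g hg
      induction hg using Subgroup.closure_induction with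
      | mem g hg => exact h g hg
      | one => intro x; exact r.refl x
      | mul g g' _ _ h1 h2 => intro x; exact r.trans (h2 x) (h1 (g' x))
      | inv g _ h1 =>
        intro x
        have := h1 (g⁻¹ x)
        rw [apply_inv_cancel] at this
        exact r.symm this
    obtain ⟨⟨g, hg⟩, rfl⟩ : x ∈ MulAction.orbit (Subgroup.closure S) y := hxy
    exact r.symm (key g hg y)

theorem gen_mono_closure {S T : Set (Perm γ)} (h : S ⊆ Subgroup.closure T) :
    gen S ≤ gen T :=
  gen_le_iff.2 fun _ hg x => gen_rel_apply (h hg) x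

theorem orbitRel_zpowers (π : Perm γ) :
    MulAction.orbitRel (Subgroup.zpowers π) γ = gen {π} := by
  rw [gen, Subgroup.zpowers_eq_closure]

theorem orbitRel_zpowers_iff (π : Perm γ) (x y : γ) :
    MulAction.orbitRel (Subgroup.zpowers π) γ x y ↔ π.SameCycle x y := by
  rw [sameCycle_comm]
  constructor
  · rintro ⟨⟨_, n, rfl⟩, h⟩
    exact ⟨n, h⟩
  · rintro ⟨n, h⟩
    exact ⟨⟨_, n, rfl⟩, h⟩

theorem gen_singleton_iff (π : Perm γ) (x y : γ) : gen {π} x y ↔ π.SameCycle x y := by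
  rw [← orbitRel_zpowers, orbitRel_zpowers_iff]

theorem sameCycle_le {π : Perm γ} {r : Setoid γ} (h : ∀ x, r x (π x)) {x y : γ}
    (hxy : π.SameCycle x y) : r x y := by
  have : gen {π} ≤ r := gen_le_iff.2 (by simpa using h)
  exact this ((gen_singleton_iff π x y).2 hxy)

variable [Fintype γ]

theorem classCount_antitone {r s : Setoid γ} (h : r ≤ s) : classCount s ≤ classCount r := by
  refine Nat.card_le_card_of_surjective (Quotient.map' id fun _ _ hxy => h hxy) ?_
  rintro ⟨x⟩
  exact ⟨Quotient.mk _ x, rfl⟩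

variable [DecidableEq γ]

theorem zc_eq (π : Perm γ) : zc π = classCount (gen {π}) := by
  rw [← orbitRel_zpowers]; rfl

theorem kappa_eq (σ α : Perm γ) : kappa σ α = classCount (gen {σ, α}) := rfl

/-- A transposition inside a class does not change the orbit partition. -/
theorem gen_insert_swap_of_rel {S : Set (Perm γ)} {a b : γ} (h : gen S a b) :
    gen (insert (swap a b) S) = gen S := by
  refine le_antisymm (gen_le_iff.2 ?_) (gen_mono_closure ?_)
  · rintro g (rfl | hg) x
    · rcases eq_or_ne x a with rfl | hxa
      · simpa using h
      rcases eq_or_ne x b with rfl | hxb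
      · simpa using (gen S).symm h
      rw [swap_apply_of_ne_of_ne hxa hxb]
    · exact gen_rel_apply (Subgroup.subset_closure hg) x
  · exact fun g hg => Subgroup.subset_closure (Or.inr hg)

/-- A transposition of points in distinct classes merges these two classes. -/
theorem classCount_insert_swap {S : Set (Perm γ)} {a b : γ} (h : ¬ gen S a b) :
    classCount (gen S) = classCount (gen (insert (swap a b) S)) + 1 := by
  -- The merged partition is the kernel of the map sending the class of `a` to that of `b`.
  let f : γ → Quotient (gen S) := fun x =>
    if gen S x a then Quotient.mk _ b else Quotient.mk _ x
  have hf : ∀ {x y}, gen S x y → f x = f y := by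
    intro x y hxy
    have e : gen S x a ↔ gen S y a :=
      ⟨(gen S).trans ((gen S).symm hxy), (gen S).trans hxy⟩
    simp only [f, e]
    split_ifs
    · rfl
    · exact Quotient.sound hxy
  have hb : ¬ gen S b a := fun h' => h ((gen S).symm h')
  have hfa : f a = Quotient.mk _ b := if_pos ((gen S).refl a)
  have hfb : f b = Quotient.mk _ b := if_neg hb
  have hT : gen S ≤ gen (insert (swap a b) S) :=
    gen_mono_closure fun g hg => Subgroup.subset_closure (Or.inr hg)
  have hab : gen (insert (swap a b) S) a b := by
    have := gen_rel_apply (S := insert (swap a b) S)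
      (Subgroup.subset_closure (Set.mem_insert _ _)) a
    simpa using this
  have hker : gen (insert (swap a b) S) = Setoid.ker f := by
    apply le_antisymm
    · rw [gen_le_iff]
      rintro g (rfl | hg) x
      · rw [Setoid.ker_def]
        rcases eq_or_ne x a with rfl | hxa
        · rw [swap_apply_left, hfa, hfb]
        rcases eq_or_ne x b with rfl | hxb
        · rw [swap_apply_right, hfa, hfb]
        rw [swap_apply_of_ne_of_ne hxa hxb]
      · exact hf (gen_rel_apply (Subgroup.subset_closure hg) x)
    · intro x y hxy
      have hx : ∀ x, ∃ x', f x = Quotient.mk _ x' ∧ gen (insert (swap a b) S) x x' := by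
        intro x
        by_cases hxa : gen S x a
        · exact ⟨b, if_pos hxa, (gen _).trans (hT hxa) hab⟩
        · exact ⟨x, if_neg hxa, (gen _).refl x⟩
      obtain ⟨x', h1, h2⟩ := hx x
      obtain ⟨y', h3, h4⟩ := hx y
      have : f x = f y := hxy
      rw [h1, h3] at this
      exact (gen _).trans h2 ((gen _).trans (hT (Quotient.exact this)) ((gen _).symm h4))
  have hrange : Set.range f = {Quotient.mk _ a}ᶜ := by
    ext q
    induction q using Quotient.inductionOn with | _ x => ?_
    simp only [Set.mem_range, Set.mem_compl_iff, Set.mem_singleton_iff]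
    constructor
    · rintro ⟨y, hy⟩ he
      rw [he] at hy
      by_cases hya : gen S y a
      · rw [show f y = _ from if_pos hya] at hy
        exact hb (Quotient.exact hy)
      · rw [show f y = _ from if_neg hya] at hy
        exact hya (Quotient.exact hy)
    · intro hx
      exact ⟨x, if_neg fun h' => hx (Quotient.sound h')⟩
  rw [hker, classCount, classCount, Nat.card_congr (Setoid.quotientKerEquivRange f), hrange,
    Nat.card_coe_set_eq, ← Set.ncard_add_ncard_compl {(Quotient.mk (gen S) a)},
    Set.ncard_singleton, add_comm]

/-- Multiplying by `(a b)` a permutation that separates `a` from `b` joins the two cycles. -/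
theorem sameCycle_mul_swap {π : Perm γ} {a b : γ} (h : ¬ π.SameCycle a b) :
    (π * swap a b).SameCycle a b := by
  have key : ∀ j : ℕ, (π * swap a b).SameCycle a ((π ^ (j + 1)) b) := by
    intro j
    induction j with
    | zero => exact ⟨1, by simp⟩
    | succ j ih =>
      rw [pow_succ' π (j + 1), Perm.mul_apply]
      by_cases hb : (π ^ (j + 1)) b = b
      · rw [hb]
        exact ⟨1, by simp⟩
      · have ha : (π ^ (j + 1)) b ≠ a := fun e => h (SameCycle.symm ⟨(j + 1 : ℕ), by
          rw [zpow_natCast]; exact e⟩)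
        have := sameCycle_apply_right.2 ih
        rwa [Perm.mul_apply, swap_apply_of_ne_of_ne ha hb] at this
  have := key (orderOf π - 1)
  rwa [Nat.sub_add_cancel (orderOf_pos π), pow_orderOf_eq_one, Perm.one_apply] at this

/-- Multiplying by `(a b)` a permutation with `a` and `b` in a common cycle cuts that cycle. -/
theorem not_sameCycle_mul_swap {π : Perm γ} {a b : γ} (hab : a ≠ b) (h : π.SameCycle a b) :
    ¬ (π * swap a b).SameCycle a b := by
  have hex : ∃ k : ℕ, (π ^ k) a = b := by
    obtain ⟨k, -, hk⟩ := h.exists_pow_eq'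
    exact ⟨k, hk⟩
  let k := Nat.find hex
  have hk : (π ^ k) a = b := Nat.find_spec hex
  have hmin : ∀ m < k, (π ^ m) a ≠ b := fun m hm => Nat.find_min hex hm
  have hk0 : 1 ≤ k := by
    rcases Nat.eq_zero_or_pos k with h0 | h0
    · rw [h0] at hk
      exact absurd hk hab
    · exact h0
  have hna : ∀ i, 1 ≤ i → i ≤ k → (π ^ i) a ≠ a := by
    intro i hi hik e
    apply hmin (k - i) (by omega)
    rw [← hk]
    conv_rhs => rw [← Nat.sub_add_cancel hik, pow_add, Perm.mul_apply, e]
  -- The cycle of `b` after the cut consists of `π a, π² a, …, πᵏ a = b`.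
  have key : ∀ j : ℕ, ∃ i, 1 ≤ i ∧ i ≤ k ∧ ((π * swap a b) ^ j) b = (π ^ i) a := by
    intro j
    induction j with
    | zero => exact ⟨k, hk0, le_rfl, hk.symm⟩
    | succ j ih =>
      obtain ⟨i, hi, hik, e⟩ := ih
      rw [pow_succ', Perm.mul_apply, e]
      rcases hik.lt_or_eq with hlt | rfl
      · refine ⟨i + 1, by omega, hlt, ?_⟩
        rw [Perm.mul_apply, swap_apply_of_ne_of_ne (hna i hi hik) (hmin i hlt), pow_succ' π i,
          Perm.mul_apply]
      · refine ⟨1, le_rfl, hk0, ?_⟩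
        rw [hk]
        simp
  intro hs
  obtain ⟨j, -, hj⟩ := hs.symm.exists_pow_eq'
  obtain ⟨i, hi, hik, e⟩ := key j
  exact hna i hi hik (e.symm.trans hj)

theorem gen_insert_mul_swap (S : Set (Perm γ)) (α t : Perm γ) (ht : t * t = 1) :
    gen (insert t (insert (α * t) S)) = gen (insert t (insert α S)) := by
  have key : ∀ α : Perm γ, gen (insert t (insert (α * t) S)) ≤ gen (insert t (insert α S)) := by
    intro α
    apply gen_mono_closure
    rintro g (rfl | rfl | hg)
    · exact Subgroup.subset_closure (by simp)
    · exact mul_mem (Subgroup.subset_closure (by simp)) (Subgroup.subset_closure (by simp))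
    · exact Subgroup.subset_closure (by simp [hg])
  refine le_antisymm (key α) ?_
  have := key (α * t)
  rwa [mul_assoc, ht, mul_one] at this

theorem zc_mul_swap_of_not {π : Perm γ} {a b : γ} (h : ¬ π.SameCycle a b) :
    zc π = zc (π * swap a b) + 1 := by
  have h1 := classCount_insert_swap (S := {π}) (a := a) (b := b)
    (by rwa [gen_singleton_iff])
  have h2 := gen_insert_swap_of_rel (S := {π * swap a b}) (a := a) (b := b)
    (by rw [gen_singleton_iff]; exact sameCycle_mul_swap h)
  have h3 := gen_insert_mul_swap ∅ π (swap a b) (swap_mul_self a b)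
  simp only [insert_empty_eq] at h3
  rw [zc_eq, zc_eq, h1, ← h3, h2]

theorem zc_mul_swap_of_sameCycle {π : Perm γ} {a b : γ} (hab : a ≠ b) (h : π.SameCycle a b) :
    zc (π * swap a b) = zc π + 1 := by
  have := zc_mul_swap_of_not (not_sameCycle_mul_swap hab h)
  rwa [mul_assoc, swap_mul_self, mul_one] at this

theorem zc_inv (π : Perm γ) : zc π⁻¹ = zc π := by
  rw [zc, zc, Subgroup.zpowers_inv]

theorem zc_le_card (π : Perm γ) : zc π ≤ Fintype.card γ := by
  rw [← Nat.card_eq_fintype_card]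
  exact Nat.card_le_card_of_surjective _ Quotient.mk_surjective

theorem zc_one : zc (1 : Perm γ) = Fintype.card γ := by
  rw [← Nat.card_eq_fintype_card, zc_eq]
  refine (Nat.card_congr (Equiv.ofBijective _ ⟨?_, Quotient.mk_surjective⟩)).symm
  intro x y hxy
  have : gen {(1 : Perm γ)} x y := Quotient.exact hxy
  rw [gen_singleton_iff] at this
  simpa using this

/-! ### Monotonicity of the genus under refinement -/

/-- Twice the genus of `(σ, α)`, as an integer. -/
noncomputable def defect (σ α : Perm γ) : ℤ :=
  Fintype.card γ + 2 * kappa σ α - zc σ - zc α - zc (α⁻¹ * σ)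

/-- Cutting a cycle of `α` by a transposition does not increase the genus. -/
theorem defect_mul_swap_le (σ : Perm γ) {α : Perm γ} {a b : γ} (hab : a ≠ b)
    (h : α.SameCycle a b) : defect σ (α * swap a b) ≤ defect σ α := by
  set t := swap a b with ht
  have htt : t * t = 1 := swap_mul_self a b
  have hα : zc (α * t) = zc α + 1 := zc_mul_swap_of_sameCycle hab h
  have e1 : zc (α⁻¹ * σ) = zc (σ⁻¹ * α) := by rw [← zc_inv]; simp
  have e2 : zc ((α * t)⁻¹ * σ) = zc (σ⁻¹ * α * t) := by rw [← zc_inv]; simp [mul_assoc]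
  have hJ : gen (insert t {σ, α * t}) = gen (insert t {σ, α}) := by
    rw [Set.pair_comm σ, Set.pair_comm σ]
    exact gen_insert_mul_swap {σ} α t htt
  have hκα : kappa σ α = classCount (gen (insert t {σ, α})) := by
    rw [kappa_eq, ht, gen_insert_swap_of_rel]
    exact gen_mono_closure (S := {α})
      (fun g hg => Subgroup.subset_closure (Or.inr hg)) ((gen_singleton_iff α a b).2 h)
  rw [defect, defect, e1, e2, hα]
  by_cases hs : (σ⁻¹ * α).SameCycle a b
  · have h1 : zc (σ⁻¹ * α * t) = zc (σ⁻¹ * α) + 1 := zc_mul_swap_of_sameCycle hab hs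
    have h2 : kappa σ (α * t) ≤ kappa σ α + 1 := by
      by_cases hr : gen {σ, α * t} a b
      · rw [hκα, ← hJ, gen_insert_swap_of_rel hr, kappa_eq]
        omega
      · rw [hκα, ← hJ, kappa_eq, classCount_insert_swap hr]
    rw [h1]
    push_cast
    linarith [(Nat.cast_le (α := ℤ)).2 h2, Nat.cast_succ (R := ℤ) (kappa σ α)]
  · have h1 : zc (σ⁻¹ * α) = zc (σ⁻¹ * α * t) + 1 := zc_mul_swap_of_not hs
    have h2 : kappa σ (α * t) = kappa σ α := by
      -- The new cycle of `σ⁻¹αt` through `a` and `b` lies in one component of `(σ, αt)`.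
      have hr : gen {σ, α * t} a b := by
        refine gen_mono_closure (S := {σ⁻¹ * α * t}) ?_
          ((gen_singleton_iff _ a b).2 (sameCycle_mul_swap hs))
        rintro g rfl
        rw [mul_assoc]
        exact mul_mem (inv_mem (Subgroup.subset_closure (by simp)))
          (Subgroup.subset_closure (by simp))
      rw [hκα, ← hJ, gen_insert_swap_of_rel hr, kappa_eq]
    rw [h1, h2]
    push_cast
    linarith

/-- Multiplying `α` by a product of `k` transpositions creates at most `k` new cycles.  If it
creates exactly `k`, then each factor cuts a cycle and the genus does not increase. -/
theorem defect_le_aux (σ : Perm γ) (k : ℕ) : ∀ δ α : Perm γ, zc δ + k = Fintype.card γ →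
    zc (α * δ⁻¹) ≤ zc α + k ∧
      (zc (α * δ⁻¹) = zc α + k → defect σ (α * δ⁻¹) ≤ defect σ α) := by
  induction k with
  | zero =>
    intro δ α hδ
    have h1 : δ = 1 := by
      by_contra hne
      obtain ⟨a, ha⟩ : ∃ a, δ a ≠ a := by
        by_contra! hc
        exact hne (Equiv.ext hc)
      have := zc_mul_swap_of_sameCycle ha.symm (π := δ) ⟨1, by simp⟩
      have := zc_le_card (δ * swap a (δ a))
      omega
    subst h1
    simp
  | succ k ih =>
    intro δ α hδ
    obtain ⟨a, ha⟩ : ∃ a, δ a ≠ a := by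
      by_contra! hc
      have h1 : δ = 1 := Equiv.ext hc
      rw [h1, zc_one] at hδ
      omega
    set b := δ a
    have hδ' : zc (δ * swap a b) = zc δ + 1 :=
      zc_mul_swap_of_sameCycle ha.symm ⟨1, by simp [b]⟩
    obtain ⟨h1, h2⟩ := ih (δ * swap a b) (α * swap a b) (by omega)
    have e : α * swap a b * (δ * swap a b)⁻¹ = α * δ⁻¹ := by
      rw [mul_inv_rev, swap_inv, ← mul_assoc, mul_assoc α, swap_mul_self, mul_one]
    rw [e] at h1 h2
    by_cases hs : α.SameCycle a b
    · have h3 := zc_mul_swap_of_sameCycle ha.symm hs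
      exact ⟨by omega, fun h4 => (h2 (by omega)).trans (defect_mul_swap_le σ ha.symm hs)⟩
    · have h3 := zc_mul_swap_of_not hs
      exact ⟨by omega, fun h4 => by omega⟩

/-- The hypothesis says that the transposition lengths `n - z` of `β` and `β⁻¹α` add up to that of
`α`, so that `β` lies on a geodesic from the identity to `α`. -/
theorem defect_le_of_geodesic (σ : Perm γ) {α β : Perm γ}
    (h : Fintype.card γ + zc α = zc β + zc (β⁻¹ * α)) : defect σ β ≤ defect σ α := by
  have h1 := zc_le_card (β⁻¹ * α)
  have e : α * (β⁻¹ * α)⁻¹ = β := by simp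
  have := (defect_le_aux σ (Fintype.card γ - zc (β⁻¹ * α)) (β⁻¹ * α) α (by omega)).2
  rw [e] at this
  exact this (by omega)

theorem defect_nonneg (σ α : Perm γ) : 0 ≤ defect σ α := by
  have h : defect σ 1 ≤ defect σ α :=
    defect_le_of_geodesic σ (by rw [zc_one]; simp)
  have hk : kappa σ 1 = zc σ := by
    rw [kappa_eq, zc_eq]
    congr 1
    apply le_antisymm <;> apply gen_mono_closure
    · rintro g (rfl | rfl)
      · exact Subgroup.subset_closure rfl
      · exact one_mem _
    · rintro g rfl
      exact Subgroup.subset_closure (by simp)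
  have h0 : defect σ 1 = 0 := by
    rw [defect, hk, zc_one]
    simp only [inv_one, one_mul]
    ring
  omega

/-! ### Cycle counts on invariant sets -/

/-- Cycle counts on the supports of the cycles of `α` add up to the total cycle count. -/
theorem sum_zcOn {π α : Perm γ} (h : ∀ x, α.SameCycle x (π x)) :
    ∑ q : Quotient (MulAction.orbitRel (Subgroup.zpowers α) γ),
      zcOn π (cycleSet α q.out) = zc π := by
  let f : Quotient (MulAction.orbitRel (Subgroup.zpowers π) γ) →
      Quotient (MulAction.orbitRel (Subgroup.zpowers α) γ) :=
    Quotient.map' id fun x y hxy => by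
      rw [orbitRel_zpowers] at hxy ⊢
      exact gen_le_iff.2 (by simpa [gen_singleton_iff] using h) hxy
  change _ = Nat.card (Quotient _)
  rw [Nat.card_eq_fintype_card, ← Finset.card_univ,
    Finset.card_eq_sum_card_fiberwise (f := f) (t := Finset.univ) (by simp)]
  refine Finset.sum_congr rfl fun q _ => ?_
  rw [zcOn, ← Set.ncard_coe_finset]
  congr 1
  ext p
  induction p using Quotient.inductionOn with | _ y => ?_
  have hfy : f (Quotient.mk _ y) = q ↔ α.SameCycle q.out y := by
    rw [← orbitRel_zpowers_iff]
    constructor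
    · intro e
      exact Quotient.exact ((Quotient.out_eq q).trans e.symm)
    · intro e
      exact (Quotient.sound e).symm.trans (Quotient.out_eq q)
  simp only [Finset.coe_filter, Finset.mem_univ, true_and, Set.mem_ofPred_eq]
  constructor
  · rintro ⟨x, hx, e⟩
    rw [← e]
    have : f (Quotient.mk _ x) = q := by
      have hx' : α.SameCycle q.out x := hx
      rw [← orbitRel_zpowers_iff] at hx'
      exact (Quotient.sound hx').symm.trans (Quotient.out_eq q)
    exact this
  · intro e
    exact ⟨y, hfy.1 e, rfl⟩

/-- The genus zero conditions on the cycles of `α`, summed over all cycles. -/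
theorem IsRefinement.geodesic {β α : Perm γ} (h : IsRefinement β α) :
    Fintype.card γ + zc α = zc β + zc (β⁻¹ * α) := by
  obtain ⟨h1, h2⟩ := h
  have h3 : ∀ x, α.SameCycle x ((β⁻¹ * α) x) := by
    intro x
    have := h1 (β⁻¹ (α x))
    rw [apply_inv_cancel] at this
    exact (sameCycle_apply_right.2 (SameCycle.refl α x)).trans this.symm
  have h4 : ∀ x, α.SameCycle x ((1 : Perm γ) x) := fun x => SameCycle.refl α x
  have hone : ∀ S : Set γ, zcOn (1 : Perm γ) S = Nat.card S := by
    intro S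
    rw [zcOn, Set.ncard_image_of_injective, Nat.card_coe_set_eq]
    intro x y hxy
    have := (orbitRel_zpowers_iff _ x y).1 (Quotient.exact hxy)
    simpa using this
  rw [← sum_zcOn h1, ← sum_zcOn h3, ← zc_one, ← sum_zcOn h4, ← Finset.sum_add_distrib]
  have : zc α = ∑ q : Quotient (MulAction.orbitRel (Subgroup.zpowers α) γ), 1 := by
    rw [Finset.sum_const, Finset.card_univ, smul_eq_mul, mul_one, ← Nat.card_eq_fintype_card]
    rfl
  rw [this, ← Finset.sum_add_distrib]
  exact Finset.sum_congr rfl fun q _ => by rw [hone, h2]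

theorem IsRefinement.kappa_le {σ β α : Perm γ} (h : IsRefinement β α) :
    kappa σ α ≤ kappa σ β := by
  rw [kappa_eq, kappa_eq]
  refine classCount_antitone (gen_le_iff.2 ?_)
  rintro g (rfl | rfl) x
  · exact gen_rel_apply (Subgroup.subset_closure (by simp)) x
  · exact gen_mono_closure (S := {α})
      (fun g hg => Subgroup.subset_closure (Or.inr hg)) ((gen_singleton_iff α _ _).2 (h.1 x))

theorem kappa_le_zc (σ β : Perm γ) : kappa σ β ≤ zc (β⁻¹ * σ) := by
  rw [kappa_eq, zc_eq]
  refine classCount_antitone (gen_mono_closure ?_)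
  rintro g rfl
  exact mul_mem (inv_mem (Subgroup.subset_closure (by simp))) (Subgroup.subset_closure (by simp))

/-! ### The medial map -/

@[simp] theorem medialAlpha_true (β : Perm γ) (i : γ) : medialAlpha β (i, true) = (β i, false) :=
  rfl

@[simp] theorem medialAlpha_false (β : Perm γ) (i : γ) :
    medialAlpha β (i, false) = (β⁻¹ i, true) := rfl

@[simp] theorem medialSigma_true (β : Perm γ) (i : γ) : medialSigma β (i, true) = (β i, false) :=
  rfl

@[simp] theorem medialSigma_false (β : Perm γ) (i : γ) :
    medialSigma β (i, false) = (i, true) := rfl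

theorem medialAlpha_inv (β : Perm γ) : (medialAlpha β)⁻¹ = medialAlpha β := by
  rw [inv_eq_iff_mul_eq_one]
  ext ⟨i, _ | _⟩ <;> simp

theorem sameCycle_medialSigma {α : Perm γ} {i j : γ} {s s' : Bool} :
    (medialSigma α).SameCycle (i, s) (j, s') ↔ α.SameCycle i j := by
  constructor
  · intro h
    have := sameCycle_le (r := (gen {α}).comap Prod.fst) (π := medialSigma α) (fun p => by
      rw [Setoid.comap_rel, gen_singleton_iff]
      rcases p with ⟨i, _ | _⟩
      · exact SameCycle.refl _ _
      · exact sameCycle_apply_right.2 (SameCycle.refl _ _)) h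
    rwa [Setoid.comap_rel, gen_singleton_iff] at this
  · intro h
    have hs : ∀ (i : γ) (s : Bool), (medialSigma α).SameCycle (i, s) (i, true) := by
      rintro i (_ | _)
      · exact ⟨1, by simp⟩
      · exact SameCycle.refl _ _
    have := sameCycle_le (r := (gen {medialSigma α}).comap fun i => (i, true)) (π := α) (fun i => by
      rw [Setoid.comap_rel, gen_singleton_iff]
      exact ⟨2, by simp [zpow_ofNat, pow_two]⟩) h
    rw [Setoid.comap_rel, gen_singleton_iff] at this
    exact (hs i s).trans (this.trans (hs j s').symm)

/-- Cycle counts are preserved by an injective map intertwining two permutations. -/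
theorem zcOn_image {δ : Type*} [Fintype δ] [DecidableEq δ] {π : Perm γ} {π' : Perm δ} {f : γ → δ}
    (hf : Function.Injective f) (h : ∀ x, π' (f x) = f (π x)) (S : Set γ) :
    zcOn π' (f '' S) = zcOn π S := by
  have hpow : ∀ (n : ℕ) x, (π' ^ n) (f x) = f ((π ^ n) x) := by
    intro n
    induction n with
    | zero => simp
    | succ n ih => intro x; rw [pow_succ', pow_succ', Perm.mul_apply, Perm.mul_apply, ih, h]
  have hs : ∀ x y, π'.SameCycle (f x) (f y) ↔ π.SameCycle x y := by
    intro x y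
    constructor
    · intro hxy
      obtain ⟨k, -, hk⟩ := hxy.exists_pow_eq'
      rw [hpow] at hk
      exact ⟨k, by rw [zpow_natCast]; exact hf hk⟩
    · intro hxy
      obtain ⟨k, -, rfl⟩ := hxy.exists_pow_eq'
      exact ⟨k, by rw [zpow_natCast, hpow]⟩
  let F : Quotient (MulAction.orbitRel (Subgroup.zpowers π) γ) →
      Quotient (MulAction.orbitRel (Subgroup.zpowers π') δ) :=
    Quotient.map' f fun x y hxy => by
      rw [orbitRel_zpowers_iff] at hxy ⊢
      exact (hs x y).2 hxy
  have hF : Function.Injective F := by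
    intro p q
    induction p using Quotient.inductionOn with | _ x => ?_
    induction q using Quotient.inductionOn with | _ y => ?_
    intro e
    have := (orbitRel_zpowers_iff _ _ _).1 (Quotient.exact e)
    exact Quotient.sound ((orbitRel_zpowers_iff _ _ _).2 ((hs x y).1 this))
  rw [zcOn, zcOn, ← Set.ncard_image_of_injective _ hF, Set.image_image, Set.image_image]
  rfl

theorem circuitCount_medialAlpha (σ β : Perm γ) :
    circuitCount σ (medialAlpha β) = zc (β⁻¹ * σ) := by
  have h := zcOn_image (π := β⁻¹ * σ) (π' := medialAlpha β * medialAlpha σ)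
    (f := fun i => (i, true)) (fun x y e => congrArg Prod.fst e) (fun x => by simp) Set.univ
  have e : (fun i : γ => (i, true)) '' Set.univ = {p : γ × Bool | p.2 = true} := by
    ext ⟨i, s⟩
    cases s <;> simp
  have e2 : zcOn (β⁻¹ * σ) Set.univ = zc (β⁻¹ * σ) := by
    rw [zcOn, Set.image_univ, Set.range_eq_univ.2 Quotient.mk_surjective, Set.ncard_univ]
    rfl
  rw [circuitCount, ← e, h, e2]

/-- The medial matching has one cycle `{i⁺, β(i)⁻}` for every unsigned point `i`. -/
theorem zcOn_medialAlpha {β : Perm γ} {S : Set γ} (hS : ∀ i, β i ∈ S ↔ i ∈ S) :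
    zcOn (medialAlpha β) {p : γ × Bool | p.1 ∈ S} = Nat.card S := by
  have hsc : ∀ i, (medialAlpha β).SameCycle (i, true) (β i, false) := fun i => ⟨1, by simp⟩
  let F : γ → Quotient (MulAction.orbitRel (Subgroup.zpowers (medialAlpha β)) (γ × Bool)) :=
    fun i => Quotient.mk _ (i, true)
  have hF : Function.Injective F := by
    intro i j e
    have h := (orbitRel_zpowers_iff _ _ _).1 (Quotient.exact e)
    have := sameCycle_le (r := Setoid.ker fun p : γ × Bool => if p.2 then p.1 else β⁻¹ p.1)
      (π := medialAlpha β) (by rintro ⟨i, _ | _⟩ <;> simp [Setoid.ker_def]) h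
    simpa [Setoid.ker_def] using this
  rw [Nat.card_coe_set_eq, ← Set.ncard_image_of_injective S hF, zcOn]
  congr 1
  ext q
  constructor
  · rintro ⟨⟨i, _ | _⟩, hi, rfl⟩
    · refine ⟨β⁻¹ i, ?_, ?_⟩
      · rw [← hS]
        simpa using hi
      · have := hsc (β⁻¹ i)
        rw [apply_inv_cancel] at this
        exact Quotient.sound ((orbitRel_zpowers_iff _ _ _).2 this)
    · exact ⟨i, hi, rfl⟩
  · rintro ⟨i, hi, rfl⟩
    exact ⟨(i, true), hi, rfl⟩

/-- The product of the medial matching with `σ′` acts as `β` on the negative points and as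
`β⁻¹α` on the positive points. -/
theorem zcOn_medialAlpha_mul_medialSigma (β α : Perm γ) (S : Set γ) :
    zcOn (medialAlpha β * medialSigma α) {p : γ × Bool | p.1 ∈ S} =
      zcOn β S + zcOn (β⁻¹ * α) S := by
  set π' := medialAlpha β * medialSigma α with hπ'
  have h1 := zcOn_image (π := β) (π' := π')
    (f := fun i => (i, false)) (fun x y e => congrArg Prod.fst e) (fun x => by simp [hπ']) S
  have h2 := zcOn_image (π := β⁻¹ * α) (π' := π')
    (f := fun i => (i, true)) (fun x y e => congrArg Prod.fst e) (fun x => by simp [hπ']) S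
  have e : {p : γ × Bool | p.1 ∈ S} =
      (fun i => (i, false)) '' S ∪ (fun i => (i, true)) '' S := by
    ext ⟨i, _ | _⟩ <;> simp
  rw [← h1, ← h2, e, zcOn, zcOn, zcOn, Set.image_union, Set.ncard_union_eq]
  rw [Set.disjoint_left]
  rintro _ ⟨_, ⟨i, -, rfl⟩, rfl⟩ ⟨_, ⟨j, -, rfl⟩, e'⟩
  have h := (orbitRel_zpowers_iff _ _ _).1 (Quotient.exact e')
  have := sameCycle_le (r := Setoid.ker fun p : γ × Bool => p.2)
    (π := π') (by rintro ⟨i, _ | _⟩ <;> simp [Setoid.ker_def, hπ']) h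
  simp [Setoid.ker_def] at this

theorem isRefinement_medial_iff (β α : Perm γ) :
    IsRefinement (medialAlpha β) (medialSigma α) ↔ IsRefinement β α := by
  have hinv : (∀ p, (medialSigma α).SameCycle p (medialAlpha β p)) ↔
      ∀ x, α.SameCycle x (β x) := by
    constructor
    · intro h x
      have := h (x, true)
      rwa [medialAlpha_true, sameCycle_medialSigma] at this
    · rintro h ⟨i, _ | _⟩
      · rw [medialAlpha_false, sameCycle_medialSigma]
        have := h (β⁻¹ i)
        rw [apply_inv_cancel] at this
        exact this.symm
      · rw [medialAlpha_true, sameCycle_medialSigma]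
        exact h i
  rw [IsRefinement, IsRefinement, hinv, Prod.forall, medialAlpha_inv]
  refine and_congr_right fun h => forall_congr' fun x => ?_
  have hset : ∀ s, cycleSet (medialSigma α) (x, s) = {p : γ × Bool | p.1 ∈ cycleSet α x} := by
    intro s
    ext ⟨j, s'⟩
    exact sameCycle_medialSigma
  have hcard : Nat.card {p : γ × Bool | p.1 ∈ cycleSet α x} = 2 * Nat.card (cycleSet α x) := by
    have e : {p : γ × Bool | p.1 ∈ cycleSet α x} = cycleSet α x ×ˢ (Set.univ : Set Bool) := by
      ext ⟨j, s'⟩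
      simp
    rw [e, Nat.card_coe_set_eq, Nat.card_coe_set_eq, Set.ncard_prod, Set.ncard_univ,
      Nat.card_eq_fintype_card, Fintype.card_bool, mul_comm]
  have hS : ∀ i, β i ∈ cycleSet α x ↔ i ∈ cycleSet α x := fun i =>
    ⟨fun hi => SameCycle.trans hi (h i).symm, fun hi => SameCycle.trans hi (h i)⟩
  simp only [hset, hcard, zcOn_medialAlpha hS, zcOn_medialAlpha_mul_medialSigma]
  constructor
  · intro h'
    have := h' true
    omega
  · intro h' _
    omega

theorem medialAlpha_injective : Function.Injective (medialAlpha (γ := γ)) := by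
  intro β β' h
  ext i
  have := DFunLike.congr_fun h (i, true)
  simpa using this

theorem isCoherentMatching_medialAlpha {β α : Perm γ} (h : IsRefinement β α) :
    IsCoherentMatching α (medialAlpha β) := by
  refine ⟨?_, ?_, ?_, (isRefinement_medial_iff β α).2 h⟩ <;> rintro ⟨i, _ | _⟩ <;> simp

/-- A sign-reversing involution of the signed points is the medial matching of a permutation. -/
theorem exists_eq_medialAlpha {μ : Perm (γ × Bool)} (h1 : ∀ p, μ (μ p) = p)
    (h2 : ∀ p : γ × Bool, (μ p).2 = !p.2) : ∃ β, medialAlpha β = μ := by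
  have hμ : ∀ i s, μ (i, s) = ((μ (i, s)).1, !s) := fun i s => Prod.ext rfl (h2 (i, s))
  refine ⟨⟨fun i => (μ (i, true)).1, fun i => (μ (i, false)).1, fun i => ?_, fun i => ?_⟩, ?_⟩
  · have := h1 (i, true)
    rw [hμ i true] at this
    exact congrArg Prod.fst this
  · have := h1 (i, false)
    rw [hμ i false] at this
    exact congrArg Prod.fst this
  · refine Equiv.ext ?_
    rintro ⟨i, _ | _⟩
    · exact (hμ i false).symm
    · exact (hμ i true).symm

theorem bijOn_matchingOf (α : Perm γ) :
    Set.BijOn (fun β => matchingOf β) {β : Perm γ | IsRefinement β α}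
      {μ : Perm (γ × Bool) | IsCoherentMatching α μ} := by
  refine ⟨fun β h => isCoherentMatching_medialAlpha h, medialAlpha_injective.injOn, ?_⟩
  rintro μ ⟨h1, -, h2, h3⟩
  obtain ⟨β, rfl⟩ := exists_eq_medialAlpha h1 h2
  exact ⟨β, (isRefinement_medial_iff β α).1 h3, rfl⟩

end Counting

end Hypermap

open Hypermap in
/-- for a genus-zero collection of hypermaps,
`x^{κ(σ,α)}·R(σ,α;x,x) = Σ_{β≤α} x^{z(β⁻¹σ)}`; equivalently
`j(M(σ,α);x) = x^{κ(σ,α)}·R(σ,α;x,x)`, since `β ↦ matchingOf β` is a bijection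
from the refinements of `α` to the coherent matchings of `M(σ,α)`, the state
induced by the matching of `β` having exactly `z(β⁻¹σ)` circuits. -/
theorem ncCircuitPoly_eq_whitney_diagonal
    {γ : Type*} [Fintype γ] [DecidableEq γ] (σ α : Equiv.Perm γ)
    (hg : Fintype.card γ + 2 * kappa σ α = zc σ + zc α + zc (α⁻¹ * σ))
    {A : Type*} [CommRing A] (x : A) :
    (x ^ kappa σ α * whitney σ α x x =
      ∑ β ∈ Finset.univ.filter (fun β => IsRefinement β α), x ^ zc (β⁻¹ * σ)) ∧
    ncCircuitPoly σ α x = x ^ kappa σ α * whitney σ α x x ∧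
    Set.BijOn (fun β => matchingOf β)
      {β : Equiv.Perm γ | IsRefinement β α}
      {μ : Equiv.Perm (γ × Bool) | IsCoherentMatching α μ} ∧
    ∀ β : Equiv.Perm γ, IsRefinement β α →
      circuitCount σ (matchingOf β) = zc (β⁻¹ * σ) := by
  have hA : x ^ kappa σ α * whitney σ α x x =
      ∑ β ∈ Finset.univ.filter (fun β => IsRefinement β α), x ^ zc (β⁻¹ * σ) := by
    rw [whitney, Finset.mul_sum]
    refine Finset.sum_congr rfl fun β hβ => ?_
    have hβ' : IsRefinement β α := (Finset.mem_filter.1 hβ).2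
    have hαβ := defect_le_of_geodesic σ hβ'.geodesic
    have hβ0 := defect_nonneg σ β
    have hκ := hβ'.kappa_le (σ := σ)
    have hz := kappa_le_zc σ β
    rw [← pow_add, ← pow_add]
    congr 1
    -- `(σ, β)` has genus zero, and no subtraction in the exponents is truncated.
    unfold defect at hαβ hβ0
    omega
  have hB := bijOn_matchingOf α
  refine ⟨hA, ?_, hB, fun β _ => circuitCount_medialAlpha σ β⟩
  rw [hA, ncCircuitPoly]
  symm
  refine Finset.sum_bij (fun β _ => matchingOf β) ?_ ?_ ?_ ?_
  · intro β hβ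
    exact Finset.mem_filter.2 ⟨Finset.mem_univ _, hB.mapsTo (Finset.mem_filter.1 hβ).2⟩
  · intro β _ β' _ e
    exact medialAlpha_injective e
  · intro μ hμ
    obtain ⟨β, h1, h2⟩ := hB.surjOn (Finset.mem_filter.1 hμ).2
    exact ⟨β, Finset.mem_filter.2 ⟨Finset.mem_univ _, h1⟩, h2⟩
  · intro β _
    rw [matchingOf, circuitCount_medialAlpha]
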